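/- There exist sequences of unital completely positive maps φ_n : S₀ → M_n(ℂ) and ψ_n : M_n(ℂ) → S₀ such that ψ_n ∘ φ_n converges to the identity map of S₀ in the point-norm topology, i.e., ‖X − ψ_n(φ_n(X))‖ → 0 for every X ∈ S₀. (This is the concrete completely positive approximation property underlying the nuclearity of the operator system S₀.) -/

import Mathlib

noncomputable section

open scoped ComplexOrder InnerProductSpace

/-- The Hilbert space ℓ²(ℕ) of square-summable complex sequences. -/
abbrev Hs : Type := lp (fun _ : ℕ => ℂ) 2

/-- The standard orthonormal basis vectors of ℓ²(ℕ) (indexed from 0). -/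
def e (i : ℕ) : Hs := lp.single 2 i 1

/-- The matrix unit `E i j : x ↦ ⟨x, e j⟩ e i`. -/
def E (i j : ℕ) : Hs →L[ℂ] Hs := (innerSL ℂ (e j)).smulRight (e i)

/-- `K₀`: the norm-closed linear span of the matrix units `E i j`, `(i,j) ≠ (0,0)`. -/
def K0 : Submodule ℂ (Hs →L[ℂ] Hs) :=
  (Submodule.span ℂ {T | ∃ i j : ℕ, (i, j) ≠ (0, 0) ∧ T = E i j}).topologicalClosure

/-- The operator system `S₀` spanned by `K₀` and the identity operator. -/
def S0 : Submodule ℂ (Hs →L[ℂ] Hs) := Submodule.span ℂ {(1 : Hs →L[ℂ] Hs)} ⊔ K0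

lemma one_mem_S0 : (1 : Hs →L[ℂ] Hs) ∈ S0 :=
  Submodule.mem_sup_left (Submodule.mem_span_singleton_self _)

/-- The matrix entry `X_{ij} = ⟨X e_j, e_i⟩` of a bounded operator on ℓ²(ℕ). -/
def entry (X : Hs →L[ℂ] Hs) (i j : ℕ) : ℂ := ⟪e i, X (e j)⟫_ℂ

/-- `φ_{n+1}(X) = V_{n+1}* X V_{n+1}`, the upper-left (n+1)×(n+1) corner of `X`. -/
def phi (n : ℕ) (X : Hs →L[ℂ] Hs) : Matrix (Fin (n+1)) (Fin (n+1)) ℂ :=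
  fun i j => entry X i j

/-- `Q_{n+1}`: the projection onto the orthocomplement of the span of `e 0, …, e n`. -/
def Qop (n : ℕ) : Hs →L[ℂ] Hs := 1 - ∑ i : Fin (n+1), E i i

/-- `ψ_{n+1}(Y) = V_{n+1} Y V_{n+1}* + y₀₀ Q_{n+1}`. -/
def psi (n : ℕ) (Y : Matrix (Fin (n+1)) (Fin (n+1)) ℂ) : Hs →L[ℂ] Hs :=
  (∑ i : Fin (n+1), ∑ j : Fin (n+1), Y i j • E i j) + Y 0 0 • Qop n

/-- Positivity in the C*-algebra of m×m matrices over a star ring: `M = N* N`. -/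
def MatPos {A : Type*} [Ring A] [StarRing A] {m : ℕ}
    (M : Matrix (Fin m) (Fin m) A) : Prop :=
  ∃ N : Matrix (Fin m) (Fin m) A, M = N.conjTranspose * N

/-- Complete positivity of a map between star rings: every matrix amplification
preserves positivity. -/
def IsCPfun {A B : Type*} [Ring A] [StarRing A] [Ring B] [StarRing B]
    (θ : A → B) : Prop :=
  ∀ (m : ℕ) (M : Matrix (Fin m) (Fin m) A), MatPos M → MatPos (M.map θ)

/-- Complete positivity for a map defined on the operator subsystem `S₀ ⊆ B(ℓ²(ℕ))`:
matrices over `S₀` which are positive in the C*-algebra of matrices over `B(ℓ²(ℕ))`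
are mapped to positive matrices. -/
def IsCPonS0 {B : Type*} [Ring B] [StarRing B] (θ : ↥S0 → B) : Prop :=
  ∀ (m : ℕ) (M : Matrix (Fin m) (Fin m) ↥S0),
    MatPos (M.map (fun x => (x : Hs →L[ℂ] Hs))) → MatPos (M.map θ)

/-!
Let `P_n` be the projection onto the span of `e 0, …, e n`. The compression `phi n` is completely
positive because it turns `N* N` into a sum of Gram matrices. The map `psi n` is the sum of the
corner embedding, a `*`-homomorphism, and of the state `Y ↦ Y 0 0` followed by multiplication by the
projection `1 - P_n`; both summands are completely positive. The second summand makes `psi n`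
unital and keeps its range inside `S₀`, since `psi n Y - Y 0 0 • 1` has vanishing `(0, 0)` entry.

Every `K ∈ K₀` has vanishing `(0, 0)` entry, so `psi n (phi n K) = P_n K P_n`. This equals `K`
eventually when `K` is a matrix unit, hence converges to `K` for all `K ∈ K₀` as the maps
`K ↦ P_n K P_n` are linear contractions.
-/

section CompletelyPositive

variable {A B C : Type*} [Ring A] [StarRing A] [Ring B] [StarRing B] [Ring C] [StarRing C]

lemma IsCPfun.comp {θ : B → C} {η : A → B} (hθ : IsCPfun θ) (hη : IsCPfun η) :
    IsCPfun (θ ∘ η) := fun m M hM => by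
  simpa only [Matrix.map_map] using hθ m _ (hη m M hM)

lemma IsCPfun.isCPonS0 {θ : (Hs →L[ℂ] Hs) → B} (hθ : IsCPfun θ) :
    IsCPonS0 (fun X : S0 => θ X) := fun m _ hM => hθ m _ hM

lemma isCPfun_of_starHom {F : Type*} [FunLike F A B] [NonUnitalRingHomClass F A B]
    [StarHomClass F A B] (f : F) : IsCPfun f := by
  rintro m _ ⟨N, rfl⟩
  exact ⟨N.map f, by rw [Matrix.map_mul, Matrix.conjTranspose_map f (map_star f)]⟩

lemma isCPfun_smul_of_isStarProjection {R : Type*} [CommRing R] [StarRing R] [Algebra R A]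
    [StarModule R A] {q : A} (hq : IsStarProjection q) : IsCPfun (fun c : R => c • q) := by
  rintro m _ ⟨N, rfl⟩
  refine ⟨N.map (· • q), ?_⟩
  ext a b
  simp only [Matrix.map_apply, Matrix.mul_apply, Matrix.conjTranspose_apply, star_smul,
    hq.isSelfAdjoint.star_eq, smul_mul_smul_comm, hq.isIdempotentElem.eq, Finset.sum_smul]

end CompletelyPositive

section AddCompletelyPositive

lemma exists_star_mul_self_add_star_mul_self_eq {A : Type*} [NonUnitalCStarAlgebra A] (a b : A) :
    ∃ c : A, star a * a + star b * b = star c * c := by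
  let := CStarAlgebra.spectralOrder A
  have := CStarAlgebra.spectralOrderedRing A
  exact CStarAlgebra.nonneg_iff_eq_star_mul_self.mp
    (add_nonneg (star_mul_self_nonneg a) (star_mul_self_nonneg b))

variable {A : Type*} [CStarAlgebra A] {m : ℕ}

lemma MatPos.add {M N : Matrix (Fin m) (Fin m) A} (hM : MatPos M) (hN : MatPos N) :
    MatPos (M + N) := by
  obtain ⟨P, rfl⟩ := hM
  obtain ⟨Q, rfl⟩ := hN
  -- Mathlib's C⋆-norm on `CStarMatrix` is defined only over an ordered coefficient algebra.
  let := CStarAlgebra.spectralOrder A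
  have := CStarAlgebra.spectralOrderedRing A
  exact exists_star_mul_self_add_star_mul_self_eq (CStarMatrix.ofMatrix P) (CStarMatrix.ofMatrix Q)

lemma IsCPfun.add {B : Type*} [Ring B] [StarRing B] {θ η : B → A} (hθ : IsCPfun θ)
    (hη : IsCPfun η) : IsCPfun (fun b => θ b + η b) :=
  fun m M hM => (hθ m M hM).add (hη m M hM)

end AddCompletelyPositive

section BlockMatrix

variable {ι : Type*} [Fintype ι]

open scoped MatrixOrder Matrix.Norms.L2Operator in
lemma posSemidef_iff_exists_eq_conjTranspose_mul_self {A : Matrix ι ι ℂ} :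
    A.PosSemidef ↔ ∃ B : Matrix ι ι ℂ, A = B.conjTranspose * B :=
  open scoped Classical in
  Matrix.nonneg_iff_posSemidef.symm.trans CStarAlgebra.nonneg_iff_eq_star_mul_self

variable [DecidableEq ι]

lemma matPos_iff_posSemidef_comp {m : ℕ} {M : Matrix (Fin m) (Fin m) (Matrix ι ι ℂ)} :
    MatPos M ↔ (Matrix.comp _ _ _ _ ℂ M).PosSemidef := by
  have comp_conjTranspose_mul_self (N : Matrix (Fin m) (Fin m) (Matrix ι ι ℂ)) :
      Matrix.comp _ _ _ _ ℂ (N.conjTranspose * N) =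
        (Matrix.comp _ _ _ _ ℂ N).conjTranspose * Matrix.comp _ _ _ _ ℂ N :=
    map_mul (Matrix.compRingEquiv (Fin m) ι ℂ) N.conjTranspose N
  rw [posSemidef_iff_exists_eq_conjTranspose_mul_self,
    ← (Matrix.comp (Fin m) (Fin m) ι ι ℂ).exists_congr_right]
  simp only [← comp_conjTranspose_mul_self, EmbeddingLike.apply_eq_iff_eq, MatPos]

lemma isCPfun_diag_apply (i : ι) : IsCPfun (fun Y : Matrix ι ι ℂ => Y i i) := fun _ _ hM =>
  posSemidef_iff_exists_eq_conjTranspose_mul_self.mp <|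
    (matPos_iff_posSemidef_comp.mp hM).submatrix fun a => (a, i)

end BlockMatrix

section MatrixUnits

variable {ι R A : Type*} [DecidableEq ι]

/-- Self-adjoint systems of matrix units `u i j` in a star ring. The diagonal units are not
required to sum to `1`. -/
structure IsMatrixUnits [Mul A] [Zero A] [Star A] (u : ι → ι → A) : Prop where
  mul_eq (i j k l : ι) : u i j * u k l = if j = k then u i l else 0
  star_eq (i j : ι) : star (u i j) = u j i

variable [Fintype ι] [CommSemiring R] [StarRing R] [Semiring A] [StarRing A] [Algebra R A]
  [StarModule R A] {u : ι → ι → A}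

variable (R) in
/-- The `*`-homomorphism `Y ↦ ∑ i j, Y i j • u i j` from a matrix algebra onto the span of a system
of matrix units; it need not preserve `1`. -/
def IsMatrixUnits.starHom (hu : IsMatrixUnits u) : Matrix ι ι R →⋆ₙₐ[R] A where
  toFun Y := ∑ i, ∑ j, Y i j • u i j
  map_smul' c Y := by simp [Finset.smul_sum, mul_smul]
  map_zero' := by simp
  map_add' Y Z := by simp [add_smul, Finset.sum_add_distrib]
  map_mul' Y Z := by
    simp only [Matrix.mul_apply, Finset.sum_smul, Finset.sum_mul]
    simp only [Finset.mul_sum, smul_mul_smul_comm, hu.mul_eq, smul_ite, smul_zero]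
    refine Finset.sum_congr rfl fun i _ => ?_
    rw [Finset.sum_comm]
    refine Finset.sum_congr rfl fun k _ => ?_
    rw [Finset.sum_comm]
    refine Finset.sum_congr rfl fun l _ => ?_
    simp
  map_star' Y := by
    simp only [star_sum, star_smul, hu.star_eq, Matrix.star_apply]
    exact Finset.sum_comm

lemma IsMatrixUnits.starHom_apply (hu : IsMatrixUnits u) (Y : Matrix ι ι R) :
    hu.starHom R Y = ∑ i, ∑ j, Y i j • u i j := rfl

lemma IsMatrixUnits.starHom_single (hu : IsMatrixUnits u) (i j : ι) :
    hu.starHom R (Matrix.single i j 1) = u i j := by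
  simp [starHom_apply, Matrix.single_apply, ite_and, ite_smul]

lemma IsMatrixUnits.starHom_one (hu : IsMatrixUnits u) : hu.starHom R 1 = ∑ i, u i i := by
  simp [starHom_apply, Matrix.one_apply, ite_smul]

end MatrixUnits

lemma isCPfun_add_diag_apply_smul_one_sub {ι A : Type*} [Fintype ι] [DecidableEq ι]
    [CStarAlgebra A] (f : Matrix ι ι ℂ →⋆ₙₐ[ℂ] A) (i : ι) :
    IsCPfun (fun Y => f Y + Y i i • (1 - f 1)) :=
  (isCPfun_of_starHom f).add <|
    (isCPfun_smul_of_isStarProjection ((IsStarProjection.one _).map f).one_sub).comp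
      (isCPfun_diag_apply i)

section Compression

open InnerProductSpace

variable {ι H : Type*} [NormedAddCommGroup H] [InnerProductSpace ℂ H]

/-- The compression `X ↦ V* X V` of operators along a family of vectors, where `V` sends the `i`-th
standard basis vector to `v i`. -/
def compression (v : ι → H) : (H →L[ℂ] H) →ₗ[ℂ] Matrix ι ι ℂ where
  toFun X := .of fun i j => ⟪v i, X (v j)⟫_ℂ
  map_add' X Y := by ext; simp
  map_smul' c X := by ext; simp

lemma compression_apply (v : ι → H) (X : H →L[ℂ] H) (i j : ι) :
    compression v X i j = ⟪v i, X (v j)⟫_ℂ := rfl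

lemma compression_one [DecidableEq ι] {v : ι → H} (hv : Orthonormal ℂ v) :
    compression v 1 = 1 := Matrix.gram_eq_one_iff_orthonormal.mpr hv

variable [CompleteSpace H]

lemma isCPfun_compression [Fintype ι] [DecidableEq ι] (v : ι → H) : IsCPfun (compression v) := by
  rintro m _ ⟨N, rfl⟩
  have comp_map_compression :
      Matrix.comp _ _ _ _ ℂ ((N.conjTranspose * N).map (compression v)) =
        ∑ c, Matrix.gram ℂ fun p : Fin m × ι => N c p.1 (v p.2) := by
    ext p q
    simp [compression_apply, Matrix.sum_apply, Matrix.mul_apply,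
      ContinuousLinearMap.star_eq_adjoint, ContinuousLinearMap.adjoint_inner_right]
  rw [matPos_iff_posSemidef_comp, comp_map_compression]
  exact Matrix.posSemidef_sum _ fun c _ => Matrix.posSemidef_gram ℂ _

lemma isMatrixUnits_rankOne [DecidableEq ι] {v : ι → H} (hv : Orthonormal ℂ v) :
    IsMatrixUnits fun i j => rankOne ℂ (v i) (v j) where
  mul_eq i j k l := by
    rw [ContinuousLinearMap.mul_def, rankOne_comp_rankOne, orthonormal_iff_ite.mp hv, ite_smul,
      one_smul, zero_smul]
  star_eq i j := adjoint_rankOne _ _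

lemma starHom_compression [Fintype ι] [DecidableEq ι] {v : ι → H} (hv : Orthonormal ℂ v)
    (X : H →L[ℂ] H) :
    (isMatrixUnits_rankOne hv).starHom ℂ (compression v X) =
      (isMatrixUnits_rankOne hv).starHom ℂ 1 * X * (isMatrixUnits_rankOne hv).starHom ℂ 1 := by
  simp only [IsMatrixUnits.starHom_one, Finset.sum_mul]
  simp only [Finset.mul_sum, IsMatrixUnits.starHom_apply]
  refine Finset.sum_congr rfl fun i _ => Finset.sum_congr rfl fun j _ => ?_
  ext x
  simp [compression_apply, smul_smul, mul_comm]

end Compression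

section Convergence

open Filter Topology

variable {ι 𝕜 : Type*} [NontriviallyNormedField 𝕜] {l : Filter ι}

lemma tendsto_of_mem_topologicalClosure_span {E F : Type*} [SeminormedAddCommGroup E]
    [NormedSpace 𝕜 E] [SeminormedAddCommGroup F] [NormedSpace 𝕜 F] {T : ι → E →L[𝕜] F}
    {T₀ : E →L[𝕜] F} {C : ℝ} (hT : ∀ i, ‖T i‖ ≤ C) {s : Set E}
    (hs : ∀ x ∈ s, Tendsto (T · x) l (𝓝 (T₀ x))) {x : E}
    (hx : x ∈ (Submodule.span 𝕜 s).topologicalClosure) : Tendsto (T · x) l (𝓝 (T₀ x)) := by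
  have equicontinuous : Equicontinuous fun i => (T i : E → F) :=
    ((NormedSpace.equicontinuous_TFAE T).out 5 1).mp (⟨C, hT⟩ : ∃ C, ∀ i, ‖T i‖ ≤ C)
  refine (equicontinuous x).tendsto_of_mem_closure (T₀.continuous.tendsto' x _ rfl |>.mono_left
    inf_le_left) (fun y hy => ?_) hx
  induction hy using Submodule.span_induction with
  | mem y hy => exact hs y hy
  | zero => simpa using tendsto_const_nhds
  | add y z _ _ hy hz => simpa using hy.add hz
  | smul c y _ hy => simpa using hy.const_smul c

lemma tendsto_mul_mul_of_mem_topologicalClosure_span {A : Type*} [NonUnitalSeminormedRing A]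
    [NormedSpace 𝕜 A] [IsScalarTower 𝕜 A A] [SMulCommClass 𝕜 A A] {p : ι → A}
    (hp : ∀ i, ‖p i‖ ≤ 1) {s : Set A} (hs : ∀ x ∈ s, ∀ᶠ i in l, p i * x * p i = x) {x : A}
    (hx : x ∈ (Submodule.span 𝕜 s).topologicalClosure) :
    Tendsto (fun i => p i * x * p i) l (𝓝 x) := by
  refine tendsto_of_mem_topologicalClosure_span (𝕜 := 𝕜) (C := 1)
    (T := fun i => ContinuousLinearMap.mulLeftRight 𝕜 A (p i) (p i)) (T₀ := .id 𝕜 A)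
    (fun i => ?_) (fun y hy => ?_) hx
  · exact (ContinuousLinearMap.opNorm_mulLeftRight_apply_apply_le 𝕜 A _ _).trans
      (mul_le_one₀ (hp i) (norm_nonneg _) (hp i))
  · exact tendsto_const_nhds.congr' ((hs y hy).mono fun i hi => hi.symm)

end Convergence

section S0

open Filter Topology InnerProductSpace

lemma orthonormal_e : Orthonormal ℂ e := by
  rw [orthonormal_iff_ite]
  intro i j
  simp [e, lp.inner_single_left, Pi.single_apply]

lemma orthonormal_e_fin (n : ℕ) : Orthonormal ℂ fun i : Fin (n + 1) => e i :=
  orthonormal_e.comp _ Fin.val_injective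

lemma isMatrixUnits_E (n : ℕ) : IsMatrixUnits fun i j : Fin (n + 1) => E i j :=
  isMatrixUnits_rankOne (orthonormal_e_fin n)

/-- The embedding `Y ↦ V_{n+1} Y V_{n+1}*` of `M_{n+1}(ℂ)` as the upper-left corner of
`B(ℓ²(ℕ))`. -/
def cornerHom (n : ℕ) : Matrix (Fin (n + 1)) (Fin (n + 1)) ℂ →⋆ₙₐ[ℂ] (Hs →L[ℂ] Hs) :=
  (isMatrixUnits_E n).starHom ℂ

lemma cornerHom_phi (n : ℕ) (X : Hs →L[ℂ] Hs) :
    cornerHom n (phi n X) = cornerHom n 1 * X * cornerHom n 1 :=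
  starHom_compression (orthonormal_e_fin n) X

lemma norm_cornerHom_one_le (n : ℕ) : ‖cornerHom n 1‖ ≤ 1 :=
  IsStarProjection.norm_le _ ((IsStarProjection.one _).map (cornerHom n))

lemma eventually_cornerHom_one_mul_E_mul (i j : ℕ) :
    ∀ᶠ n in atTop, cornerHom n 1 * E i j * cornerHom n 1 = E i j := by
  filter_upwards [eventually_ge_atTop i, eventually_ge_atTop j] with n hi hj
  have E_eq : cornerHom n (.single (Fin.mk i (by lia)) (Fin.mk j (by lia)) 1) = E i j :=
    (isMatrixUnits_E n).starHom_single _ _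
  rw [← E_eq, ← map_mul, ← map_mul, one_mul, mul_one]

lemma psi_eq (n : ℕ) (Y : Matrix (Fin (n + 1)) (Fin (n + 1)) ℂ) :
    psi n Y = cornerHom n Y + Y 0 0 • (1 - cornerHom n 1) := by
  rw [cornerHom, (isMatrixUnits_E n).starHom_one]
  rfl

lemma E_mem_K0 {i j : ℕ} (hij : (i, j) ≠ (0, 0)) : E i j ∈ K0 :=
  Submodule.le_topologicalClosure _ (Submodule.subset_span ⟨i, j, hij, rfl⟩)

lemma cornerHom_mem_K0 {n : ℕ} {Y : Matrix (Fin (n + 1)) (Fin (n + 1)) ℂ} (hY : Y 0 0 = 0) :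
    cornerHom n Y ∈ K0 := by
  rw [cornerHom, IsMatrixUnits.starHom_apply]
  refine Submodule.sum_mem _ fun i _ => Submodule.sum_mem _ fun j _ => ?_
  by_cases hij : i = 0 ∧ j = 0
  · obtain ⟨rfl, rfl⟩ := hij
    simp [hY]
  · exact Submodule.smul_mem _ _ (E_mem_K0 fun h => hij (by simpa using h))

lemma psi_mem_S0 (n : ℕ) (Y : Matrix (Fin (n + 1)) (Fin (n + 1)) ℂ) : psi n Y ∈ S0 := by
  have psi_decomposition : psi n Y = Y 0 0 • 1 + cornerHom n (Y - Y 0 0 • 1) := by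
    rw [psi_eq, map_sub, map_smul, smul_sub]
    abel
  rw [psi_decomposition]
  exact add_mem (Submodule.smul_mem _ _ one_mem_S0)
    (Submodule.mem_sup_right (cornerHom_mem_K0 (by simp)))

lemma entry_zero_zero_of_mem_K0 {K : Hs →L[ℂ] Hs} (hK : K ∈ K0) : entry K 0 0 = 0 := by
  let entryCLM : (Hs →L[ℂ] Hs) →L[ℂ] ℂ := innerSL ℂ (e 0) ∘L ContinuousLinearMap.apply ℂ Hs (e 0)
  suffices K0 ≤ entryCLM.ker from this hK
  refine Submodule.topologicalClosure_minimal _ (Submodule.span_le.mpr ?_) entryCLM.isClosed_ker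
  rintro _ ⟨i, j, hij, rfl⟩
  change ⟪e 0, rankOne ℂ (e i) (e j) (e 0)⟫_ℂ = 0
  simp only [inner_right_rankOne_apply, orthonormal_iff_ite.mp orthonormal_e]
  grind

/-- The map `phi n` restricted to `S₀`, as a linear map. -/
def phiLinear (n : ℕ) : S0 →ₗ[ℂ] Matrix (Fin (n + 1)) (Fin (n + 1)) ℂ :=
  compression (fun i : Fin (n + 1) => e i) ∘ₗ S0.subtype

/-- The map `psi n` as a linear map into `S₀`. -/
def psiLinear (n : ℕ) : Matrix (Fin (n + 1)) (Fin (n + 1)) ℂ →ₗ[ℂ] S0 where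
  toFun Y := ⟨psi n Y, psi_mem_S0 n Y⟩
  map_add' Y Z := by
    ext1
    simp only [psi_eq, map_add, Matrix.add_apply, add_smul, Submodule.coe_add]
    abel
  map_smul' c Y := by
    ext1
    simp [psi_eq, mul_smul]

lemma phiLinear_one (n : ℕ) : phiLinear n ⟨1, one_mem_S0⟩ = 1 :=
  compression_one (orthonormal_e_fin n)

lemma psiLinear_one (n : ℕ) : psiLinear n 1 = ⟨1, one_mem_S0⟩ :=
  Subtype.ext (by simp [psiLinear, psi_eq])

lemma isCPonS0_phiLinear (n : ℕ) : IsCPonS0 (phiLinear n) := (isCPfun_compression _).isCPonS0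

lemma isCPfun_psi (n : ℕ) : IsCPfun (psi n) := by
  simpa only [← psi_eq] using isCPfun_add_diag_apply_smul_one_sub (cornerHom n) 0

lemma psi_phi_of_mem_K0 {K : Hs →L[ℂ] Hs} (hK : K ∈ K0) (n : ℕ) :
    psi n (phi n K) = cornerHom n 1 * K * cornerHom n 1 := by
  have phi_zero_zero : phi n K 0 0 = 0 := entry_zero_zero_of_mem_K0 hK
  rw [psi_eq, phi_zero_zero, zero_smul, add_zero, cornerHom_phi]

lemma tendsto_psi_phi_of_mem_K0 {K : Hs →L[ℂ] Hs} (hK : K ∈ K0) :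
    Tendsto (fun n => psi n (phi n K)) atTop (𝓝 K) := by
  simp only [psi_phi_of_mem_K0 hK]
  refine tendsto_mul_mul_of_mem_topologicalClosure_span norm_cornerHom_one_le ?_ hK
  rintro _ ⟨i, j, -, rfl⟩
  exact eventually_cornerHom_one_mul_E_mul i j

lemma tendsto_psiLinear_phiLinear (X : S0) :
    Tendsto (fun n => (psiLinear n (phiLinear n X) : Hs →L[ℂ] Hs)) atTop (𝓝 X) := by
  obtain ⟨X, hX⟩ := X
  obtain ⟨_, hZ, K, hK, rfl⟩ := Submodule.mem_sup.mp hX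
  obtain ⟨c, rfl⟩ := Submodule.mem_span_singleton.mp hZ
  have psi_phi (n : ℕ) : (psiLinear n (phiLinear n ⟨c • 1 + K, hX⟩) : Hs →L[ℂ] Hs) =
      c • 1 + psi n (phi n K) := by
    have X_eq : (⟨c • 1 + K, hX⟩ : S0) =
      c • ⟨1, one_mem_S0⟩ + ⟨K, Submodule.mem_sup_right hK⟩ := rfl
    rw [X_eq, map_add, map_add, map_smul, map_smul, phiLinear_one, psiLinear_one]
    rfl
  simpa only [psi_phi] using (tendsto_psi_phi_of_mem_K0 hK).const_add (c • 1)

end S0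

/-- there exist sequences of unital completely positive maps
`φ_n : S₀ → M_{d n}(ℂ)` and `ψ_n : M_{d n}(ℂ) → S₀` such that `ψ_n ∘ φ_n → id_{S₀}`
in the point-norm topology. -/
theorem stmt_3 :
    ∃ (d : ℕ → ℕ)
      (φ : ∀ n : ℕ, ↥S0 →ₗ[ℂ] Matrix (Fin (d n)) (Fin (d n)) ℂ)
      (ψ : ∀ n : ℕ, Matrix (Fin (d n)) (Fin (d n)) ℂ →ₗ[ℂ] ↥S0),
      (∀ n, φ n ⟨1, one_mem_S0⟩ = 1) ∧
      (∀ n, IsCPonS0 (φ n)) ∧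
      (∀ n, ψ n 1 = ⟨1, one_mem_S0⟩) ∧
      (∀ n, IsCPfun (fun Y : Matrix (Fin (d n)) (Fin (d n)) ℂ =>
        ((ψ n Y : ↥S0) : Hs →L[ℂ] Hs))) ∧
      ∀ X : ↥S0,
        Filter.Tendsto
          (fun n => ‖(X : Hs →L[ℂ] Hs) - ((ψ n (φ n X) : ↥S0) : Hs →L[ℂ] Hs)‖)
          Filter.atTop (nhds 0) := by
  refine ⟨fun n => n + 1, phiLinear, psiLinear, phiLinear_one, isCPonS0_phiLinear, psiLinear_one,
    isCPfun_psi, fun X => ?_⟩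
  simpa only [norm_sub_rev] using
    tendsto_iff_norm_sub_tendsto_zero.mp (tendsto_psiLinear_phiLinear X)
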